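/- Let ρ>0, ρ̃>0 with ρ≠ρ̃, G>0, P₀>0 and 0<k̂₀<1 be real numbers; set N := k̂₀(ρ−ρ̃) − ρ, P(t) := √(P₀² − 2G·P₀·N·t + ρρ̃G²t²) and k̂(t) := (ρ − P′(t)/G)/(ρ−ρ̃). Then 0 < k̂(t) < 1 for every t≥0, and consequently 0 < ∫₀ᵗ k̂(τ)dτ < t for every t>0. -/

import Mathlib

/-- `Q(t) = P₀² − 2GP₀Nt + ρρ̃G²t²`, the square of the shock mass (formula (34)). -/
noncomputable def Qf (ρ ρt G P₀ N t : ℝ) : ℝ :=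
  P₀ ^ 2 - 2 * G * P₀ * N * t + ρ * ρt * G ^ 2 * t ^ 2

/-- `P(t) = √Q(t)`, the shock mass (formula (34)). -/
noncomputable def Pf (ρ ρt G P₀ N : ℝ) : ℝ → ℝ :=
  fun t => Real.sqrt (Qf ρ ρt G P₀ N t)

/-- `k̂(t) = (ρ − P′(t)/G)/(ρ − ρ̃)`, the normalized momentum coefficient. -/
noncomputable def khatf (ρ ρt G P₀ N : ℝ) : ℝ → ℝ :=
  fun t => (ρ - deriv (Pf ρ ρt G P₀ N) t / G) / (ρ - ρt)

/-!
Exchanging the two sides of the shock, `(ρ, ρ̃, k̂₀) ↦ (ρ̃, ρ, 1 - k̂₀)`, fixes `N` and `P` and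
turns `k̂` into `1 - k̂`, so only the lower bounds need proof. For these, multiplying numerator and
denominator of `k̂ = (ρ - P′/G) / (ρ - ρ̃)` by the conjugate `ρ + P′/G` cancels the factor
`ρ - ρ̃`, whatever its sign, and leaves a quotient of manifestly positive quantities.
-/

/-- The product `P(t) P′(t) / G` of the shock mass and its normalized growth rate. It is affine in
`t`, being `Q′(t) / (2G)`. -/
noncomputable def massMulRate (ρ ρt G P₀ N t : ℝ) : ℝ :=
  ρ * ρt * G * t - P₀ * N

section

variable {ρ ρt G P₀ N k t : ℝ}

theorem Pf_comm (ρ ρt G P₀ N : ℝ) : Pf ρt ρ G P₀ N = Pf ρ ρt G P₀ N := by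
  funext t
  simp only [Pf, Qf, mul_comm ρt ρ]

theorem khatf_swap (hne : ρ ≠ ρt) (t : ℝ) :
    khatf ρt ρ G P₀ N t = 1 - khatf ρ ρt G P₀ N t := by
  have hsub : ρ - ρt ≠ 0 := sub_ne_zero.2 hne
  have hsub' : ρt - ρ ≠ 0 := sub_ne_zero.2 hne.symm
  simp only [khatf, Pf_comm ρ ρt]
  rw [one_sub_div hsub, div_eq_div_iff hsub' hsub]
  ring

theorem sq_le_Qf (hρρt : 0 ≤ ρ * ρt) (hG : 0 ≤ G) (hP₀ : 0 ≤ P₀) (hN : N ≤ 0) (ht : 0 ≤ t) :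
    P₀ ^ 2 ≤ Qf ρ ρt G P₀ N t := by
  have hlin : 0 ≤ 2 * G * P₀ * -N * t := by
    have := neg_nonneg.2 hN
    positivity
  have hquad : 0 ≤ ρ * ρt * G ^ 2 * t ^ 2 := by positivity
  unfold Qf
  linarith

theorem Qf_pos (hρρt : 0 ≤ ρ * ρt) (hG : 0 ≤ G) (hP₀ : 0 < P₀) (hN : N ≤ 0) (ht : 0 ≤ t) :
    0 < Qf ρ ρt G P₀ N t :=
  (pow_pos hP₀ 2).trans_le (sq_le_Qf hρρt hG hP₀.le hN ht)

theorem massMulRate_nonneg (hρρt : 0 ≤ ρ * ρt) (hG : 0 ≤ G) (hP₀ : 0 ≤ P₀) (hN : N ≤ 0)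
    (ht : 0 ≤ t) : 0 ≤ massMulRate ρ ρt G P₀ N t :=
  sub_nonneg.2 ((mul_nonpos_of_nonneg_of_nonpos hP₀ hN).trans (by positivity))

theorem hasDerivAt_Qf (ρ ρt G P₀ N t : ℝ) :
    HasDerivAt (Qf ρ ρt G P₀ N) (2 * G * massMulRate ρ ρt G P₀ N t) t := by
  have hlin := ((hasDerivAt_id t).const_mul (2 * G * P₀ * N)).const_sub (P₀ ^ 2)
  have hquad := ((hasDerivAt_id t).pow 2).const_mul (ρ * ρt * G ^ 2)
  refine (hlin.add hquad).congr_deriv ?_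
  simp only [massMulRate, id]
  ring

theorem hasDerivAt_Pf (hQ : Qf ρ ρt G P₀ N t ≠ 0) :
    HasDerivAt (Pf ρ ρt G P₀ N) (G * massMulRate ρ ρt G P₀ N t / Pf ρ ρt G P₀ N t) t := by
  refine ((hasDerivAt_Qf ρ ρt G P₀ N t).sqrt hQ).congr_deriv ?_
  rw [mul_assoc, mul_div_mul_left _ _ two_ne_zero, Pf]

theorem khatf_eq (hG : G ≠ 0) (hQ : Qf ρ ρt G P₀ N t ≠ 0) :
    khatf ρ ρt G P₀ N t =
      (ρ - massMulRate ρ ρt G P₀ N t / Pf ρ ρt G P₀ N t) / (ρ - ρt) := by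
  rw [khatf, (hasDerivAt_Pf hQ).deriv, mul_div_assoc, mul_div_cancel_left₀ _ hG]

theorem sq_mul_Qf_sub_massMulRate_sq (hN : N = k * (ρ - ρt) - ρ) :
    ρ ^ 2 * Qf ρ ρt G P₀ N t - massMulRate ρ ρt G P₀ N t ^ 2 =
      (ρ - ρt) * (P₀ ^ 2 * k * (ρ - N) + ρ * (Qf ρ ρt G P₀ N t - P₀ ^ 2)) := by
  subst hN
  unfold Qf massMulRate
  ring

theorem khatf_eq_rationalized (hne : ρ ≠ ρt) (hG : G ≠ 0) (hN : N = k * (ρ - ρt) - ρ)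
    (hQ : 0 < Qf ρ ρt G P₀ N t)
    (hconj : ρ * Pf ρ ρt G P₀ N t + massMulRate ρ ρt G P₀ N t ≠ 0) :
    khatf ρ ρt G P₀ N t =
      (P₀ ^ 2 * k * (ρ - N) + ρ * (Qf ρ ρt G P₀ N t - P₀ ^ 2)) /
        (Pf ρ ρt G P₀ N t * (ρ * Pf ρ ρt G P₀ N t + massMulRate ρ ρt G P₀ N t)) := by
  have hsub : ρ - ρt ≠ 0 := sub_ne_zero.2 hne
  have hP : Pf ρ ρt G P₀ N t ≠ 0 := (Real.sqrt_pos.2 hQ).ne'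
  have hP_sq : Pf ρ ρt G P₀ N t ^ 2 = Qf ρ ρt G P₀ N t := Real.sq_sqrt hQ.le
  have hdiff := sq_mul_Qf_sub_massMulRate_sq (G := G) (P₀ := P₀) (t := t) hN
  rw [khatf_eq hG hQ.ne', sub_div' hP, div_div,
    div_eq_div_iff (mul_ne_zero hP hsub) (mul_ne_zero hP hconj)]
  linear_combination
    Pf ρ ρt G P₀ N t * hdiff + Pf ρ ρt G P₀ N t * ρ ^ 2 * hP_sq

theorem khatf_pos (hρ : 0 < ρ) (hρt : 0 ≤ ρt) (hne : ρ ≠ ρt) (hG : 0 < G) (hP₀ : 0 < P₀)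
    (hk : 0 < k) (hN : N = k * (ρ - ρt) - ρ) (hN₀ : N ≤ 0) (ht : 0 ≤ t) :
    0 < khatf ρ ρt G P₀ N t := by
  have hρρt : 0 ≤ ρ * ρt := mul_nonneg hρ.le hρt
  have hQ : 0 < Qf ρ ρt G P₀ N t := Qf_pos hρρt hG.le hP₀ hN₀ ht
  have hP : 0 < Pf ρ ρt G P₀ N t := Real.sqrt_pos.2 hQ
  have hconj : 0 < ρ * Pf ρ ρt G P₀ N t + massMulRate ρ ρt G P₀ N t :=
    add_pos_of_pos_of_nonneg (mul_pos hρ hP) (massMulRate_nonneg hρρt hG.le hP₀.le hN₀ ht)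
  have hgrowth : 0 ≤ Qf ρ ρt G P₀ N t - P₀ ^ 2 :=
    sub_nonneg.2 (sq_le_Qf hρρt hG.le hP₀.le hN₀ ht)
  have hρN : 0 < ρ - N := sub_pos.2 (hN₀.trans_lt hρ)
  rw [khatf_eq_rationalized hne hG.ne' hN hQ hconj.ne']
  positivity

theorem continuousOn_khatf (hG : G ≠ 0) :
    ContinuousOn (khatf ρ ρt G P₀ N) {t | 0 < Qf ρ ρt G P₀ N t} := by
  have hcontQ : Continuous (Qf ρ ρt G P₀ N) := by unfold Qf; fun_prop
  have hcontP : Continuous (Pf ρ ρt G P₀ N) := hcontQ.sqrt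
  have hcontR : Continuous (massMulRate ρ ρt G P₀ N) := by unfold massMulRate; fun_prop
  have hquot := hcontR.continuousOn.div hcontP.continuousOn
    fun t (ht : 0 < Qf ρ ρt G P₀ N t) ↦ (Real.sqrt_pos.2 ht).ne'
  exact ((continuousOn_const.sub hquot).div_const (ρ - ρt)).congr
    fun t ht ↦ khatf_eq hG (ne_of_gt ht)

theorem intervalIntegrable_khatf (hρρt : 0 ≤ ρ * ρt) (hG : 0 < G) (hP₀ : 0 < P₀) (hN : N ≤ 0)
    (ht : 0 ≤ t) : IntervalIntegrable (khatf ρ ρt G P₀ N) MeasureTheory.volume 0 t := by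
  refine ((continuousOn_khatf hG.ne').mono fun τ hτ ↦ ?_).intervalIntegrable
  rw [Set.uIcc_of_le ht] at hτ
  exact Qf_pos hρρt hG.le hP₀ hN hτ.1

theorem integral_khatf_pos (hρ : 0 < ρ) (hρt : 0 ≤ ρt) (hne : ρ ≠ ρt) (hG : 0 < G)
    (hP₀ : 0 < P₀) (hk : 0 < k) (hN : N = k * (ρ - ρt) - ρ) (hN₀ : N ≤ 0) (ht : 0 < t) :
    0 < ∫ τ in (0 : ℝ)..t, khatf ρ ρt G P₀ N τ :=
  intervalIntegral.intervalIntegral_pos_of_pos_on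
    (intervalIntegrable_khatf (mul_nonneg hρ.le hρt) hG hP₀ hN₀ ht.le)
    (fun _ hτ ↦ khatf_pos hρ hρt hne hG hP₀ hk hN hN₀ hτ.1.le) ht

theorem integral_khatf_swap (hne : ρ ≠ ρt)
    (hint : IntervalIntegrable (khatf ρ ρt G P₀ N) MeasureTheory.volume 0 t) :
    ∫ τ in (0 : ℝ)..t, khatf ρt ρ G P₀ N τ = t - ∫ τ in (0 : ℝ)..t, khatf ρ ρt G P₀ N τ := by
  simp only [khatf_swap hne]
  rw [intervalIntegral.integral_sub intervalIntegrable_const hint, integral_one, sub_zero]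

end

/-- Stability of the shock front (conditions (35)–(36)): `0 < k̂₀ < 1` propagates. -/
theorem stmt_10 (ρ ρt G P₀ khat₀ N : ℝ)
    (hρ : 0 < ρ) (hρt : 0 < ρt) (hne : ρ ≠ ρt) (hG : 0 < G) (hP₀ : 0 < P₀)
    (hk₀ : 0 < khat₀) (hk₁ : khat₀ < 1)
    (hN : N = khat₀ * (ρ - ρt) - ρ) :
    (∀ t : ℝ, 0 ≤ t → 0 < khatf ρ ρt G P₀ N t ∧ khatf ρ ρt G P₀ N t < 1) ∧
    (∀ t : ℝ, 0 < t →
      0 < (∫ τ in (0:ℝ)..t, khatf ρ ρt G P₀ N τ) ∧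
      (∫ τ in (0:ℝ)..t, khatf ρ ρt G P₀ N τ) < t) := by
  have hk₁' : 0 < 1 - khat₀ := sub_pos.2 hk₁
  have hN_swap : N = (1 - khat₀) * (ρt - ρ) - ρt := by rw [hN]; ring
  have hN₀ : N ≤ 0 := by
    have hconvex : 0 ≤ (1 - khat₀) * ρ + khat₀ * ρt := by positivity
    linarith
  refine ⟨fun t ht ↦ ⟨khatf_pos hρ hρt.le hne hG hP₀ hk₀ hN hN₀ ht, ?_⟩,
    fun t ht ↦ ⟨integral_khatf_pos hρ hρt.le hne hG hP₀ hk₀ hN hN₀ ht, ?_⟩⟩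
  · have hpos := khatf_pos hρt hρ.le hne.symm hG hP₀ hk₁' hN_swap hN₀ ht
    rwa [khatf_swap hne, sub_pos] at hpos
  · have hpos := integral_khatf_pos hρt hρ.le hne.symm hG hP₀ hk₁' hN_swap hN₀ ht
    have hint := intervalIntegrable_khatf (mul_pos hρ hρt).le hG hP₀ hN₀ ht.le
    rwa [integral_khatf_swap hne hint, sub_pos] at hpos
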